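/- arXiv:1803.09952 — 7 statements merged into one kernel-verified Lean document; each statement's English description precedes it below -/
import Mathlib

section
/- Let (S_1^*, S_2^*) be a feasible pair for the Semi-Restricted SSR instance (A,p) that minimizes MR(S_1,S_2,A) over all feasible pairs for (A,p), and suppose a_{max S_2^*} < Q. Then Σ_{i∈S_1^*} a_i ≤ Q and Σ_{j∈S_2^*} a_j < 2·Q. -/
open Finset

/-- Ratio of the sums of two index sets, with weights `f`. -/
noncomputable def ssrR (f : ℕ → ℝ) (S₁ S₂ : Finset ℕ) : ℝ :=
  (∑ i ∈ S₁, f i) / (∑ j ∈ S₂, f j)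

/-- Max ratio of the sums of two index sets, with weights `f`. -/
noncomputable def ssrMR (f : ℕ → ℝ) (S₁ S₂ : Finset ℕ) : ℝ :=
  max (ssrR f S₁ S₂) (ssrR f S₂ S₁)

/-- Feasibility for the Semi-Restricted SSR instance `(A, p)`:
`S₁, S₂ ⊆ {1,…,n}` are nonempty, disjoint, `max S₁ = p` and `max S₂ > p`. -/
def SemiFeasible (n p : ℕ) (S₁ S₂ : Finset ℕ) : Prop :=
  S₁ ⊆ Finset.Icc 1 n ∧ S₂ ⊆ Finset.Icc 1 n ∧ S₁.Nonempty ∧ S₂.Nonempty ∧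
    Disjoint S₁ S₂ ∧ S₁.max = (p : WithBot ℕ) ∧ (p : WithBot ℕ) < S₂.max


/-- an optimal feasible pair `(S₁*, S₂*)` for the Semi-Restricted SSR
instance `(A, p)` with `a_{max S₂*} < Q` satisfies `∑_{S₁*} a ≤ Q` and `∑_{S₂*} a < 2Q`. -/
theorem stmt0 (n p : ℕ) (a : ℕ → ℕ)
    (hpos : ∀ i ∈ Finset.Icc 1 n, 0 < a i)
    (hmono : StrictMonoOn a (Finset.Icc 1 n))
    (hp1 : 1 ≤ p) (hpn : p < n)
    (Q : ℕ) (hQ : Q = ∑ i ∈ Finset.Icc 1 p, a i)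
    (S₁ S₂ : Finset ℕ) (hne₂ : S₂.Nonempty)
    (hfeas : SemiFeasible n p S₁ S₂)
    (hopt : ∀ T₁ T₂ : Finset ℕ, SemiFeasible n p T₁ T₂ →
      ssrMR (fun i => (a i : ℝ)) S₁ S₂ ≤ ssrMR (fun i => (a i : ℝ)) T₁ T₂)
    (hval : a (S₂.max' hne₂) < Q) :
    (∑ i ∈ S₁, a i ≤ Q) ∧ (∑ j ∈ S₂, a j < 2 * Q) := by
  obtain ⟨h1, h2, hn1, hn2, hd, hm1, hm2⟩ := hfeas
  have hsub : S₁ ⊆ Finset.Icc 1 p := by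
    intro x hx
    have hx1 := Finset.mem_Icc.1 (h1 hx)
    have := Finset.le_max_of_eq hx hm1
    exact Finset.mem_Icc.2 ⟨hx1.1, this⟩
  have hS1 : ∑ i ∈ S₁, a i ≤ Q := by
    rw [hQ]
    exact Finset.sum_le_sum_of_subset hsub
  refine ⟨hS1, ?_⟩
  by_contra hcon
  push Not at hcon
  have hmM := S₂.max'_mem hne₂
  have hpm : p < S₂.max' hne₂ := by
    rw [← Finset.coe_max' hne₂] at hm2
    exact WithBot.coe_lt_coe.1 hm2
  obtain ⟨x, hx, hxm⟩ : ∃ x ∈ S₂, x ≠ S₂.max' hne₂ := by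
    by_contra hc
    push Not at hc
    have he : S₂ = {S₂.max' hne₂} := Finset.eq_singleton_iff_unique_mem.2 ⟨hmM, hc⟩
    have h3 : ∑ j ∈ S₂, a j = a (S₂.max' hne₂) := by
      conv_lhs => rw [he]
      simp
    omega
  have hxlt : a x < a (S₂.max' hne₂) :=
    hmono (by exact_mod_cast h2 hx) (by exact_mod_cast h2 hmM)
      (lt_of_le_of_ne (S₂.le_max' x hx) hxm)
  have hsum : a x + ∑ j ∈ S₂.erase x, a j = ∑ j ∈ S₂, a j := Finset.add_sum_erase S₂ a hx
  have hmE : S₂.max' hne₂ ∈ S₂.erase x := Finset.mem_erase.2 ⟨fun h => hxm h.symm, hmM⟩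
  have hxpos := hpos x (h2 hx)
  have hS1pos : 0 < ∑ i ∈ S₁, a i := Finset.sum_pos (fun i hi => hpos i (h1 hi)) hn1
  have hT : SemiFeasible n p S₁ (S₂.erase x) :=
    ⟨h1, (Finset.erase_subset _ _).trans h2, hn1, ⟨_, hmE⟩,
      hd.mono_right (Finset.erase_subset _ _), hm1,
      lt_of_lt_of_le (WithBot.coe_lt_coe.2 hpm) (Finset.le_max hmE)⟩
  have key := hopt _ _ hT
  have hA : (0 : ℝ) < ∑ i ∈ S₁, (a i : ℝ) := by exact_mod_cast hS1pos
  have hB : ∑ i ∈ S₁, (a i : ℝ) < ∑ i ∈ S₂.erase x, (a i : ℝ) := by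
    have : ∑ i ∈ S₁, a i < ∑ i ∈ S₂.erase x, a i := by omega
    exact_mod_cast this
  have hC : ∑ i ∈ S₂.erase x, (a i : ℝ) < ∑ i ∈ S₂, (a i : ℝ) := by
    have : ∑ i ∈ S₂.erase x, a i < ∑ i ∈ S₂, a i := by omega
    exact_mod_cast this
  refine absurd key (not_le.2 ?_)
  unfold ssrMR ssrR
  refine lt_of_lt_of_le (max_lt ?_ ?_) (le_max_right _ _)
  · exact ((div_lt_one (hA.trans hB)).2 hB).trans ((one_lt_div hA).2 (hB.trans hC))
  · exact div_lt_div_of_pos_right hC hA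
end

section
/- Let (S_1, S_2) be a feasible pair for the Semi-Restricted SSR instance (A,p) such that a_i < Q for every i ∈ S_2 and Σ_{j∈S_2} a_j ≥ 2·Q. Then the pair (S_1, S_2 ∖ {min S_2}) is also feasible for (A,p) and satisfies MR(S_1, S_2 ∖ {min S_2}, A) < MR(S_1, S_2, A). -/
open Finset

/-- if `(S₁, S₂)` is feasible for `(A, p)`, every element of `S₂` has value
less than `Q`, and `∑_{S₂} a ≥ 2Q`, then `(S₁, S₂ \ {min S₂})` is also feasible and has
strictly smaller max ratio. -/
theorem stmt1 (n p : ℕ) (a : ℕ → ℕ)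
    (hpos : ∀ i ∈ Finset.Icc 1 n, 0 < a i)
    (hmono : StrictMonoOn a (Finset.Icc 1 n))
    (hp1 : 1 ≤ p) (hpn : p < n)
    (Q : ℕ) (hQ : Q = ∑ i ∈ Finset.Icc 1 p, a i)
    (S₁ S₂ : Finset ℕ) (hne₂ : S₂.Nonempty)
    (hfeas : SemiFeasible n p S₁ S₂)
    (hsmall : ∀ i ∈ S₂, a i < Q)
    (hbig : 2 * Q ≤ ∑ j ∈ S₂, a j) :
    SemiFeasible n p S₁ (S₂.erase (S₂.min' hne₂)) ∧
      ssrMR (fun i => (a i : ℝ)) S₁ (S₂.erase (S₂.min' hne₂)) <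
        ssrMR (fun i => (a i : ℝ)) S₁ S₂ := by
  obtain ⟨h1, h2, h3, h4, h5, h6, h7⟩ := hfeas
  set m := S₂.min' hne₂ with hm
  have hmem : m ∈ S₂ := S₂.min'_mem hne₂
  have hsum : a m + ∑ j ∈ S₂.erase m, a j = ∑ j ∈ S₂, a j := Finset.add_sum_erase S₂ a hmem
  have hmQ := hsmall m hmem
  have hm0 : 0 < a m := hpos m (h2 hmem)
  have hS1 : ∑ i ∈ S₁, a i ≤ Q := by
    rw [hQ]
    apply Finset.sum_le_sum_of_subset
    intro x hx
    have hx1 := Finset.mem_Icc.1 (h1 hx)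
    exact Finset.mem_Icc.2 ⟨hx1.1, Finset.le_max_of_eq hx h6⟩
  have hS1pos : 0 < ∑ i ∈ S₁, a i := Finset.sum_pos (fun i hi => hpos i (h1 hi)) h3
  have hT : Q < ∑ j ∈ S₂.erase m, a j := by omega
  have hne : (S₂.erase m).Nonempty := by
    rw [Finset.nonempty_iff_ne_empty]
    intro h
    rw [h] at hT
    simp at hT
  have hk : ∃ k ∈ S₂.erase m, p < k := by
    obtain ⟨k, hk⟩ := Finset.max_of_nonempty h4
    have hkm := Finset.mem_of_max hk
    rw [hk] at h7
    have hpk : p < k := WithBot.coe_lt_coe.1 h7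
    by_cases hkk : k = m
    · obtain ⟨x, hx⟩ := hne
      have := S₂.min'_le x (Finset.mem_of_mem_erase hx)
      exact ⟨x, hx, by omega⟩
    · exact ⟨k, Finset.mem_erase.2 ⟨hkk, hkm⟩, hpk⟩
  refine ⟨⟨h1, (Finset.erase_subset _ _).trans h2, h3, hne,
    h5.mono_right (Finset.erase_subset _ _), h6, ?_⟩, ?_⟩
  · obtain ⟨k, hk, hpk⟩ := hk
    exact lt_of_lt_of_le (WithBot.coe_lt_coe.2 hpk) (Finset.le_max hk)
  · unfold ssrMR ssrR
    have e1 : (0 : ℝ) < ∑ i ∈ S₁, (a i : ℝ) := by exact_mod_cast hS1pos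
    have e2 : ∑ i ∈ S₁, (a i : ℝ) < ∑ j ∈ S₂.erase m, (a j : ℝ) := by
      exact_mod_cast lt_of_le_of_lt hS1 hT
    have e3 : ∑ j ∈ S₂.erase m, (a j : ℝ) < ∑ j ∈ S₂, (a j : ℝ) := by
      have : ∑ j ∈ S₂.erase m, a j < ∑ j ∈ S₂, a j := by omega
      exact_mod_cast this
    refine lt_max_of_lt_right (max_lt ?_ ?_)
    · exact ((div_lt_one (e1.trans e2)).2 e2).trans ((one_lt_div e1).2 (e2.trans e3))
    · exact div_lt_div_of_pos_right e3 e1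
end

section
/- Suppose the set C = {i ∈ {1,…,n} : a_i ≥ Q} is nonempty and let q_0 = min C. Then for every feasible pair (S_1,S_2) for the Semi-Restricted SSR instance (A,p) with a_{max S_2} ≥ Q, one has MR({1,…,p}, {q_0}, A) ≤ MR(S_1, S_2, A). In other words, the pair ({1,…,p}, {q_0}) is optimal among all feasible pairs whose larger-indexed set has maximum element of value at least Q. -/
open Finset

/-- if `C = {i : a_i ≥ Q}` is nonempty with minimum `q₀`, then the pair
`({1,…,p}, {q₀})` is optimal among all feasible pairs `(S₁, S₂)` for `(A, p)` whose
larger-indexed set has maximum element of value at least `Q`. -/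
theorem stmt2 (n p : ℕ) (a : ℕ → ℕ)
    (hpos : ∀ i ∈ Finset.Icc 1 n, 0 < a i)
    (hmono : StrictMonoOn a (Finset.Icc 1 n))
    (hp1 : 1 ≤ p) (hpn : p < n)
    (Q : ℕ) (hQ : Q = ∑ i ∈ Finset.Icc 1 p, a i)
    (C : Finset ℕ) (hCdef : C = (Finset.Icc 1 n).filter (fun i => Q ≤ a i))
    (hC : C.Nonempty)
    (q₀ : ℕ) (hq₀ : q₀ = C.min' hC) :
    ∀ S₁ S₂ : Finset ℕ, ∀ hne₂ : S₂.Nonempty, SemiFeasible n p S₁ S₂ →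
      Q ≤ a (S₂.max' hne₂) →
      ssrMR (fun i => (a i : ℝ)) (Finset.Icc 1 p) {q₀} ≤
        ssrMR (fun i => (a i : ℝ)) S₁ S₂ := by
  intro S₁ S₂ hne₂ hf hQm
  obtain ⟨h1, h2, hn1, -, -, hmax, -⟩ := hf
  have hm : S₂.max' hne₂ ∈ S₂ := Finset.max'_mem _ _
  have hmC : S₂.max' hne₂ ∈ C := by
    rw [hCdef, Finset.mem_filter]; exact ⟨h2 hm, hQm⟩
  have hq : q₀ ∈ C := hq₀ ▸ Finset.min'_mem C hC
  have hle : q₀ ≤ S₂.max' hne₂ := hq₀ ▸ Finset.min'_le C _ hmC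
  rw [hCdef, Finset.mem_filter] at hq
  have haq : a q₀ ≤ a (S₂.max' hne₂) :=
    hmono.monotoneOn (by exact_mod_cast hq.1) (by exact_mod_cast h2 hm) hle
  have hs2 : a q₀ ≤ ∑ j ∈ S₂, a j :=
    haq.trans (Finset.single_le_sum (f := a) (fun _ _ => Nat.zero_le _) hm)
  have hs1 : ∑ i ∈ S₁, a i ≤ Q := by
    rw [hQ]
    apply Finset.sum_le_sum_of_subset
    intro i hi
    exact Finset.mem_Icc.2 ⟨(Finset.mem_Icc.1 (h1 hi)).1, Finset.le_max_of_eq hi hmax⟩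
  have hs1pos : 0 < ∑ i ∈ S₁, a i := Finset.sum_pos (fun i hi => hpos i (h1 hi)) hn1
  have hQpos : 0 < Q := hs1pos.trans_le hs1
  have e : (∑ i ∈ Finset.Icc 1 p, (a i : ℝ)) = (Q : ℝ) := by rw [hQ]; push_cast; rfl
  have r1 : (Q : ℝ) ≤ a q₀ := by exact_mod_cast hq.2
  have r2 : (a q₀ : ℝ) ≤ ∑ j ∈ S₂, (a j : ℝ) := by exact_mod_cast hs2
  have r3 : (∑ i ∈ S₁, (a i : ℝ)) ≤ Q := by exact_mod_cast hs1
  have r4 : (0 : ℝ) < ∑ i ∈ S₁, (a i : ℝ) := by exact_mod_cast hs1pos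
  have r5 : (0 : ℝ) < Q := by exact_mod_cast hQpos
  have key : (a q₀ : ℝ) / Q ≤ (∑ j ∈ S₂, (a j : ℝ)) / (∑ i ∈ S₁, (a i : ℝ)) :=
    div_le_div₀ (by linarith) r2 r4 r3
  unfold ssrMR ssrR
  simp only [Finset.sum_singleton, e]
  refine le_trans (max_le ?_ key) (le_max_right _ _)
  refine le_trans ?_ key
  exact ((div_le_one (r5.trans_le r1)).2 r1).trans ((one_le_div r5).2 r1)
end

section
/- Fix an integer d and let F_d be the collection of feasible pairs (S_1,S_2) for the Semi-Restricted SSR instance (A,p) with Σ_{i∈S_1} a_i − Σ_{j∈S_2} a_j = d. If (S_1',S_2') ∈ F_d maximizes the total sum Σ_{i∈S_1} a_i + Σ_{j∈S_2} a_j over F_d, then MR(S_1',S_2',A) ≤ MR(S_1,S_2,A) for every (S_1,S_2) ∈ F_d. -/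
open Finset

/-- fix `d`; among feasible pairs for `(A, p)` whose difference of sums
equals `d`, any pair maximizing the total sum minimizes the max ratio. -/
theorem stmt6 (n p : ℕ) (a : ℕ → ℕ)
    (hpos : ∀ i ∈ Finset.Icc 1 n, 0 < a i)
    (hmono : StrictMonoOn a (Finset.Icc 1 n))
    (hp1 : 1 ≤ p) (hpn : p < n)
    (d : ℤ)
    (S₁' S₂' : Finset ℕ)
    (hfeas' : SemiFeasible n p S₁' S₂')
    (hdiff' : (∑ i ∈ S₁', (a i : ℤ)) - ∑ j ∈ S₂', (a j : ℤ) = d)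
    (hmaxtotal : ∀ S₁ S₂ : Finset ℕ, SemiFeasible n p S₁ S₂ →
      (∑ i ∈ S₁, (a i : ℤ)) - ∑ j ∈ S₂, (a j : ℤ) = d →
      (∑ i ∈ S₁, a i) + ∑ j ∈ S₂, a j ≤ (∑ i ∈ S₁', a i) + ∑ j ∈ S₂', a j) :
    ∀ S₁ S₂ : Finset ℕ, SemiFeasible n p S₁ S₂ →
      (∑ i ∈ S₁, (a i : ℤ)) - ∑ j ∈ S₂, (a j : ℤ) = d →
      ssrMR (fun i => (a i : ℝ)) S₁' S₂' ≤ ssrMR (fun i => (a i : ℝ)) S₁ S₂ := by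
  intro S₁ S₂ hf hd
  have hle := hmaxtotal S₁ S₂ hf hd
  have pos : ∀ T : Finset ℕ, T ⊆ Finset.Icc 1 n → T.Nonempty → 0 < ∑ i ∈ T, a i :=
    fun T hT hne => Finset.sum_pos (fun i hi => hpos i (hT hi)) hne
  have h1' := pos _ hfeas'.1 hfeas'.2.2.1
  have h2' := pos _ hfeas'.2.1 hfeas'.2.2.2.1
  have h1 := pos _ hf.1 hf.2.2.1
  have h2 := pos _ hf.2.1 hf.2.2.2.1
  unfold ssrMR ssrR
  simp only [← Nat.cast_sum] at hdiff' hd ⊢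
  generalize ∑ i ∈ S₁', a i = x' at *
  generalize ∑ i ∈ S₂', a i = y' at *
  generalize ∑ i ∈ S₁, a i = x at *
  generalize ∑ i ∈ S₂, a i = y at *
  have e : x' + y = x + y' := by omega
  have hx : x ≤ x' := by omega
  have hy : y ≤ y' := by omega
  clear hdiff' hd hle hmaxtotal
  have key : ∀ u v u' v' : ℕ, 0 < v → 0 < v' → u' + v = u + v' → v ≤ v' → v ≤ u →
      (u' : ℝ) / v' ≤ (u : ℝ) / v := by
    intro u v u' v' hv hv' e hvv huv
    have hv : (0 : ℝ) < v := by exact_mod_cast hv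
    have hv' : (0 : ℝ) < v' := by exact_mod_cast hv'
    have e : (u' : ℝ) + v = u + v' := by exact_mod_cast e
    have hvv : (v : ℝ) ≤ v' := by exact_mod_cast hvv
    have huv : (v : ℝ) ≤ u := by exact_mod_cast huv
    rw [div_le_div_iff₀ hv' hv]
    have : (u' : ℝ) = u + v' - v := by linarith
    rw [this]
    nlinarith [mul_nonneg (sub_nonneg.2 hvv) (sub_nonneg.2 huv)]
  have one : ∀ u v : ℕ, 0 < u → u ≤ v → (u : ℝ) / v ≤ (v : ℝ) / u := by
    intro u v hu huv
    have hu' : (0 : ℝ) < u := by exact_mod_cast hu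
    have hv' : (0 : ℝ) < v := by exact_mod_cast hu.trans_le huv
    have huv : (u : ℝ) ≤ v := by exact_mod_cast huv
    rw [div_le_div_iff₀ hv' hu']
    nlinarith
  rcases le_total y x with h | h
  · have k := key x y x' y' h2 h2' (by omega) hy h
    have o := one y' x' h2' (by omega)
    exact (max_le k (o.trans k)).trans (le_max_left _ _)
  · have k := key y x y' x' h1 h1' (by omega) hx h
    have o := one x' y' h1' (by omega)
    exact (max_le (o.trans k) k).trans (le_max_right _ _)
end

section
/- Let ε ∈ (0,1), p ∈ {1,…,n−1}, δ = ε·a_p/(3n), and a'_i = ⌊a_i/δ⌋ for each i. Then for any nonempty disjoint index sets S_A, S_B ⊆ {1,…,n} with max S_A ≥ p and max S_B ≥ p: MR(S_A, S_B, A) ≤ MR(S_A, S_B, A') + ε/3, where ratios with respect to A' are computed using the values a'_i in place of a_i. -/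
open Finset

lemma ssr_aux (n : ℕ) (a : ℕ → ℕ)
    (hpos : ∀ i ∈ Finset.Icc 1 n, 0 < a i)
    (hmono : StrictMonoOn a (Finset.Icc 1 n))
    (ε : ℝ) (hε0 : 0 < ε) (hε1 : ε < 1)
    (p : ℕ) (hp1 : 1 ≤ p) (hpn : p < n)
    (δ : ℝ) (hδ : δ = ε * (a p : ℝ) / (3 * n))
    (a' : ℕ → ℤ) (ha' : ∀ i, a' i = ⌊(a i : ℝ) / δ⌋)
    (SA SB : Finset ℕ)
    (hsubA : SA ⊆ Finset.Icc 1 n) (hsubB : SB ⊆ Finset.Icc 1 n)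
    (hneB : SB.Nonempty) (hmaxB : p ≤ SB.max' hneB) :
    ssrR (fun i => (a i : ℝ)) SA SB ≤ ssrR (fun i => (a' i : ℝ)) SA SB + ε / 3 := by
  have hpm : p ∈ Finset.Icc 1 n := Finset.mem_Icc.2 ⟨hp1, hpn.le⟩
  have hap : (0 : ℝ) < a p := by exact_mod_cast hpos p hpm
  have hn : (1 : ℝ) ≤ n := by exact_mod_cast (by omega : 1 ≤ n)
  have hn0 : (0 : ℝ) < n := by linarith
  have hδ0 : 0 < δ := by rw [hδ]; positivity
  have hnδ : n * δ = ε / 3 * a p := by rw [hδ]; field_simp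
  have hδap : δ ≤ a p := by nlinarith
  have hlo : ∀ i, δ * (a' i : ℝ) ≤ a i := fun i => by
    have := Int.floor_le ((a i : ℝ) / δ)
    rw [← ha', le_div_iff₀ hδ0] at this
    linarith
  have hhi : ∀ i, (a i : ℝ) ≤ δ * (a' i : ℝ) + δ := fun i => by
    have := Int.lt_floor_add_one ((a i : ℝ) / δ)
    rw [← ha', div_lt_iff₀ hδ0] at this
    linarith
  have hnn : ∀ i, (0 : ℝ) ≤ a' i := fun i => by
    rw [ha']
    exact_mod_cast Int.floor_nonneg.2 (by positivity)
  set m := SB.max' hneB with hm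
  have hmB : m ∈ SB := Finset.max'_mem _ _
  have hapm : (a p : ℝ) ≤ a m := by
    exact_mod_cast hmono.monotoneOn (by simpa using hpm) (by simpa using hsubB hmB) hmaxB
  have hm1 : (1 : ℝ) ≤ a' m := by
    have : (1 : ℤ) ≤ a' m := by
      rw [ha', Int.le_floor, le_div_iff₀ hδ0]
      push_cast
      linarith
    exact_mod_cast this
  have hY' : (1 : ℝ) ≤ ∑ j ∈ SB, (a' j : ℝ) :=
    hm1.trans (Finset.single_le_sum (f := fun j => (a' j : ℝ)) (fun i _ => hnn i) hmB)
  have hY : (a p : ℝ) ≤ ∑ j ∈ SB, (a j : ℝ) :=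
    hapm.trans (Finset.single_le_sum (f := fun j => (a j : ℝ)) (fun i _ => by positivity) hmB)
  have hYY : δ * ∑ j ∈ SB, (a' j : ℝ) ≤ ∑ j ∈ SB, (a j : ℝ) := by
    rw [Finset.mul_sum]
    exact Finset.sum_le_sum fun i _ => hlo i
  have hcard : (SA.card : ℝ) ≤ n := by
    have := Finset.card_le_card hsubA
    rw [Nat.card_Icc] at this
    exact_mod_cast (by omega : SA.card ≤ n)
  have hXX : ∑ j ∈ SA, (a j : ℝ) ≤ δ * (∑ j ∈ SA, (a' j : ℝ)) + n * δ := by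
    have h1 : ∑ j ∈ SA, (a j : ℝ) ≤ ∑ j ∈ SA, (δ * (a' j : ℝ) + δ) :=
      Finset.sum_le_sum fun i _ => hhi i
    rw [Finset.sum_add_distrib, ← Finset.mul_sum, Finset.sum_const, nsmul_eq_mul] at h1
    nlinarith
  have hX' : 0 ≤ ∑ j ∈ SA, (a' j : ℝ) := Finset.sum_nonneg fun i _ => hnn i
  unfold ssrR
  simp only
  generalize ∑ j ∈ SA, (a' j : ℝ) = X' at *
  generalize ∑ j ∈ SB, (a' j : ℝ) = Y' at *
  generalize ∑ j ∈ SA, (a j : ℝ) = X at *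
  generalize ∑ j ∈ SB, (a j : ℝ) = Y at *
  have hY'0 : 0 < Y' := by linarith
  rw [div_le_iff₀ (by linarith)]
  have h2 : X' / Y' * (δ * Y') ≤ X' / Y' * Y :=
    mul_le_mul_of_nonneg_left hYY (by positivity)
  have h3 : X' / Y' * (δ * Y') = δ * X' := by field_simp
  have h4 : ε / 3 * a p ≤ ε / 3 * Y := mul_le_mul_of_nonneg_left hY (by positivity)
  linarith

/-- with `δ = ε·a_p/(3n)` and scaled values `a'_i = ⌊a_i/δ⌋`, for nonempty
disjoint `S_A, S_B ⊆ {1,…,n}` with `max S_A ≥ p` and `max S_B ≥ p`: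
`MR(S_A, S_B, A) ≤ MR(S_A, S_B, A') + ε/3`. -/
theorem stmt9 (n : ℕ) (a : ℕ → ℕ)
    (hpos : ∀ i ∈ Finset.Icc 1 n, 0 < a i)
    (hmono : StrictMonoOn a (Finset.Icc 1 n))
    (ε : ℝ) (hε0 : 0 < ε) (hε1 : ε < 1)
    (p : ℕ) (hp1 : 1 ≤ p) (hpn : p < n)
    (δ : ℝ) (hδ : δ = ε * (a p : ℝ) / (3 * n))
    (a' : ℕ → ℤ) (ha' : ∀ i, a' i = ⌊(a i : ℝ) / δ⌋)
    (SA SB : Finset ℕ)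
    (hsubA : SA ⊆ Finset.Icc 1 n) (hsubB : SB ⊆ Finset.Icc 1 n)
    (hneA : SA.Nonempty) (hneB : SB.Nonempty) (hdisj : Disjoint SA SB)
    (hmaxA : p ≤ SA.max' hneA) (hmaxB : p ≤ SB.max' hneB) :
    ssrMR (fun i => (a i : ℝ)) SA SB ≤ ssrMR (fun i => (a' i : ℝ)) SA SB + ε / 3 := by
  unfold ssrMR
  have h1 := ssr_aux n a hpos hmono ε hε0 hε1 p hp1 hpn δ hδ a' ha' SA SB hsubA hsubB hneB hmaxB
  have h2 := ssr_aux n a hpos hmono ε hε0 hε1 p hp1 hpn δ hδ a' ha' SB SA hsubB hsubA hneA hmaxA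
  exact max_le (h1.trans (by gcongr; exact le_max_left _ _))
    (h2.trans (by gcongr; exact le_max_right _ _))
end

section
/- Let ε ∈ (0,1), p ∈ {1,…,n−1}, δ = ε·a_p/(3n), and a'_i = ⌊a_i/δ⌋. Suppose (S_A, S_B) is a feasible pair for the Semi-Restricted SSR instance (A,p) that minimizes MR(S_1,S_2,A') over all feasible pairs for (A,p), and suppose (S_1^*, S_2^*) is a feasible pair for (A,p) that minimizes MR(S_1,S_2,A) over all feasible pairs for (A,p). Then MR(S_A, S_B, A) ≤ (1+ε)·MR(S_1^*, S_2^*, A). -/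
open Finset

lemma key_sum (n : ℕ) (a : ℕ → ℕ)
    (hpos : ∀ i ∈ Finset.Icc 1 n, 0 < a i)
    (hmono : StrictMonoOn a (Finset.Icc 1 n))
    (ε : ℝ) (hε0 : 0 < ε) (hε1 : ε < 1)
    (p : ℕ) (hp1 : 1 ≤ p) (hpn : p < n)
    (δ : ℝ) (hδ : δ = ε * (a p : ℝ) / (3 * n))
    (a' : ℕ → ℤ) (ha' : ∀ i, a' i = ⌊(a i : ℝ) / δ⌋)
    (T : Finset ℕ) (hT : T ⊆ Finset.Icc 1 n) (hc : T.card + 1 ≤ n)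
    (q : ℕ) (hq : q ∈ T) (hpq : p ≤ q) :
    0 < δ ∧ 0 < ∑ i ∈ T, (a' i : ℝ) ∧ δ * ∑ i ∈ T, (a' i : ℝ) ≤ ∑ i ∈ T, (a i : ℝ) ∧
      ∑ i ∈ T, (a i : ℝ) ≤ (1 + ε / 3) * (δ * ∑ i ∈ T, (a' i : ℝ)) := by
  have hpm : p ∈ Finset.Icc 1 n := Finset.mem_Icc.2 ⟨hp1, hpn.le⟩
  have hap : (0 : ℝ) < a p := by exact_mod_cast hpos p hpm
  have hn : (0 : ℝ) < n := by exact_mod_cast (by omega : 0 < n)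
  have hδ0 : 0 < δ := by rw [hδ]; positivity
  have hle : ∀ i, δ * (a' i : ℝ) ≤ a i := by
    intro i
    have h := Int.floor_le ((a i : ℝ) / δ)
    rw [← ha', le_div_iff₀ hδ0] at h
    linarith
  have hge : ∀ i, (a i : ℝ) ≤ δ * (a' i : ℝ) + δ := by
    intro i
    have h := (Int.lt_floor_add_one ((a i : ℝ) / δ)).le
    rw [← ha', div_le_iff₀ hδ0] at h
    linarith
  have hnn : ∀ i, (0 : ℝ) ≤ a' i := by
    intro i
    have : 0 ≤ a' i := by rw [ha']; exact Int.floor_nonneg.2 (by positivity)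
    exact_mod_cast this
  have h1 : (a p : ℝ) ≤ a q := by
    exact_mod_cast hmono.monotoneOn (by exact_mod_cast hpm) (by exact_mod_cast hT hq) hpq
  have h2 : (a' q : ℝ) ≤ ∑ i ∈ T, (a' i : ℝ) :=
    Finset.single_le_sum (f := fun i => (a' i : ℝ)) (fun i _ => hnn i) hq
  have h3 : δ * ∑ i ∈ T, (a' i : ℝ) ≤ ∑ i ∈ T, (a i : ℝ) := by
    rw [Finset.mul_sum]; exact Finset.sum_le_sum fun i _ => hle i
  have h4 : ∑ i ∈ T, (a i : ℝ) ≤ δ * ∑ i ∈ T, (a' i : ℝ) + T.card * δ := by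
    have := Finset.sum_le_sum fun i (_ : i ∈ T) => hge i
    rwa [Finset.sum_add_distrib, ← Finset.mul_sum, Finset.sum_const, nsmul_eq_mul] at this
  have h5 : ε / 3 * a p = n * δ := by rw [hδ]; field_simp
  have hc' : (T.card : ℝ) + 1 ≤ n := by exact_mod_cast hc
  have h6 : δ * (a' q : ℝ) ≤ δ * ∑ i ∈ T, (a' i : ℝ) := mul_le_mul_of_nonneg_left h2 hδ0.le
  have h7 : (a p : ℝ) - δ ≤ δ * ∑ i ∈ T, (a' i : ℝ) := by linarith [hge q]
  have h8 : ((T.card : ℝ) + 1) * δ ≤ n * δ := mul_le_mul_of_nonneg_right hc' hδ0.le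
  have h9 : ε / 3 * (a p - δ) ≤ ε / 3 * (δ * ∑ i ∈ T, (a' i : ℝ)) :=
    mul_le_mul_of_nonneg_left h7 (by positivity)
  have h10 : ε * δ < 1 * δ := mul_lt_mul_of_pos_right hε1 hδ0
  refine ⟨hδ0, ?_, h3, by nlinarith⟩
  have hn1 : (1 : ℝ) ≤ n := by exact_mod_cast (by omega : 1 ≤ n)
  have h11 : δ < a p := by
    rw [hδ, div_lt_iff₀ (by positivity)]
    nlinarith
  exact pos_of_mul_pos_right (by linarith : 0 < δ * ∑ i ∈ T, (a' i : ℝ)) hδ0.le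

lemma ratio_le (x y x' y' c δ : ℝ) (hδ : 0 < δ) (hx : 0 ≤ x') (hy : 0 < y') (hc : 0 ≤ c)
    (h1 : x ≤ c * (δ * x')) (h2 : δ * y' ≤ y) : x / y ≤ c * (x' / y') := by
  have hp : 0 < δ * y' := by positivity
  calc x / y ≤ (c * (δ * x')) / (δ * y') := div_le_div₀ (by positivity) h1 hp h2
    _ = c * (x' / y') := by field_simp

lemma ratio_le' (x y x' y' c δ : ℝ) (hδ : 0 < δ) (hx : 0 ≤ x') (hy : 0 < y') (hc : 0 ≤ c)
    (h1 : δ * x' ≤ x) (h2 : y ≤ c * (δ * y')) (hy0 : 0 < y) : x' / y' ≤ c * (x / y) := by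
  rw [← mul_div_assoc, div_le_div_iff₀ hy hy0]
  have e1 : x' * y ≤ x' * (c * (δ * y')) := mul_le_mul_of_nonneg_left h2 hx
  have e2 : (c * y') * (δ * x') ≤ (c * y') * x := mul_le_mul_of_nonneg_left h1 (by positivity)
  nlinarith

lemma feas_facts {n p : ℕ} {S T : Finset ℕ} (h : SemiFeasible n p S T) :
    S ⊆ Finset.Icc 1 n ∧ T ⊆ Finset.Icc 1 n ∧ S.card + 1 ≤ n ∧ T.card + 1 ≤ n ∧ p ∈ S ∧
      ∃ q ∈ T, p ≤ q := by
  obtain ⟨hS, hT, hS0, hT0, hd, hm, hM⟩ := h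
  have hu := Finset.card_le_card (Finset.union_subset hS hT)
  rw [Finset.card_union_of_disjoint hd, Nat.card_Icc] at hu
  have := hS0.card_pos
  have := hT0.card_pos
  refine ⟨hS, hT, by omega, by omega, Finset.mem_of_max hm, ?_⟩
  obtain ⟨q, hq⟩ := Finset.max_of_nonempty hT0
  refine ⟨q, Finset.mem_of_max hq, ?_⟩
  rw [hq] at hM
  exact (WithBot.coe_lt_coe.1 hM).le

/-- if `(S_A, S_B)` is a feasible pair for `(A, p)` minimizing the max
ratio with respect to the scaled instance `A'`, and `(S₁*, S₂*)` is a feasible pair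
minimizing the max ratio with respect to `A`, then
`MR(S_A, S_B, A) ≤ (1+ε)·MR(S₁*, S₂*, A)`. -/
theorem stmt11 (n : ℕ) (a : ℕ → ℕ)
    (hpos : ∀ i ∈ Finset.Icc 1 n, 0 < a i)
    (hmono : StrictMonoOn a (Finset.Icc 1 n))
    (ε : ℝ) (hε0 : 0 < ε) (hε1 : ε < 1)
    (p : ℕ) (hp1 : 1 ≤ p) (hpn : p < n)
    (δ : ℝ) (hδ : δ = ε * (a p : ℝ) / (3 * n))
    (a' : ℕ → ℤ) (ha' : ∀ i, a' i = ⌊(a i : ℝ) / δ⌋)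
    (SA SB : Finset ℕ)
    (hfeasAB : SemiFeasible n p SA SB)
    (hoptAB : ∀ T₁ T₂ : Finset ℕ, SemiFeasible n p T₁ T₂ →
      ssrMR (fun i => (a' i : ℝ)) SA SB ≤ ssrMR (fun i => (a' i : ℝ)) T₁ T₂)
    (S₁ S₂ : Finset ℕ)
    (hfeas : SemiFeasible n p S₁ S₂)
    (hopt : ∀ T₁ T₂ : Finset ℕ, SemiFeasible n p T₁ T₂ →
      ssrMR (fun i => (a i : ℝ)) S₁ S₂ ≤ ssrMR (fun i => (a i : ℝ)) T₁ T₂) :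
    ssrMR (fun i => (a i : ℝ)) SA SB ≤
      (1 + ε) * ssrMR (fun i => (a i : ℝ)) S₁ S₂ := by
  have key := key_sum n a hpos hmono ε hε0 hε1 p hp1 hpn δ hδ a' ha'
  have hopt' := hoptAB S₁ S₂ hfeas
  obtain ⟨f1, f2, f3, f4, f5, q, f6, f7⟩ := feas_facts hfeasAB
  obtain ⟨g1, g2, g3, g4, g5, r, g6, g7⟩ := feas_facts hfeas
  obtain ⟨hδ0, A1, A2, A3⟩ := key SA f1 f3 p f5 le_rfl
  obtain ⟨-, B1, B2, B3⟩ := key SB f2 f4 q f6 f7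
  obtain ⟨-, C1, C2, C3⟩ := key S₁ g1 g3 p g5 le_rfl
  obtain ⟨-, D1, D2, D3⟩ := key S₂ g2 g4 r g6 g7
  have hc : 0 ≤ 1 + ε / 3 := by positivity
  have E1 : ssrMR (fun i => (a i : ℝ)) SA SB
      ≤ (1 + ε / 3) * ssrMR (fun i => (a' i : ℝ)) SA SB := by
    refine max_le ?_ ?_
    · exact (ratio_le _ _ _ _ _ δ hδ0 A1.le B1 hc A3 B2).trans
        (mul_le_mul_of_nonneg_left (le_max_left _ _) hc)
    · exact (ratio_le _ _ _ _ _ δ hδ0 B1.le A1 hc B3 A2).trans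
        (mul_le_mul_of_nonneg_left (le_max_right _ _) hc)
  have C0 := (mul_pos hδ0 C1).trans_le C2
  have D0 := (mul_pos hδ0 D1).trans_le D2
  have E2 : ssrMR (fun i => (a' i : ℝ)) S₁ S₂
      ≤ (1 + ε / 3) * ssrMR (fun i => (a i : ℝ)) S₁ S₂ := by
    refine max_le ?_ ?_
    · exact (ratio_le' _ _ _ _ _ δ hδ0 C1.le D1 hc C2 D3 D0).trans
        (mul_le_mul_of_nonneg_left (le_max_left _ _) hc)
    · exact (ratio_le' _ _ _ _ _ δ hδ0 D1.le C1 hc D2 C3 C0).trans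
        (mul_le_mul_of_nonneg_left (le_max_right _ _) hc)
  have hM : 0 ≤ ssrMR (fun i => (a i : ℝ)) S₁ S₂ :=
    (div_pos C0 D0).le.trans (le_max_left _ _)
  calc _ ≤ _ := E1
    _ ≤ (1 + ε / 3) * ((1 + ε / 3) * ssrMR (fun i => (a i : ℝ)) S₁ S₂) :=
      mul_le_mul_of_nonneg_left (hopt'.trans E2) hc
    _ = ((1 + ε / 3) * (1 + ε / 3)) * ssrMR (fun i => (a i : ℝ)) S₁ S₂ := by ring
    _ ≤ _ := mul_le_mul_of_nonneg_right (by nlinarith) hM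
end

section
/- Let n ≥ 2 and ε ∈ (0,1). For each p ∈ {1,…,n−1}, set δ_p = ε·a_p/(3n) and let A'_p be the scaled instance with entries ⌊a_i/δ_p⌋; let (S_1^p, S_2^p) be a feasible pair for the Semi-Restricted SSR instance (A,p) minimizing MR(S_1,S_2,A'_p) over all feasible pairs for (A,p). Let p̂ ∈ {1,…,n−1} achieve the minimum of MR(S_1^p, S_2^p, A) over p. Then MR(S_1^{p̂}, S_2^{p̂}, A) ≤ (1+ε)·min MR(S_1,S_2,A), where the minimum on the right is taken over all pairs of nonempty disjoint index sets S_1, S_2 ⊆ {1,…,n}. That is, taking the best over p of the optimal solutions of the scaled Semi-Restricted instances yields a (1+ε)-approximation for the Subset-Sums Ratio problem on A. -/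
open Finset

lemma ssr_key (n p q : ℕ) (a : ℕ → ℕ) (ε : ℝ) (hε0 : 0 < ε) (hε1 : ε < 1)
    (hn : 2 ≤ n) (hp : 0 < a p) (hq : a p ≤ a q) (S : Finset ℕ) (hqS : q ∈ S)
    (hc : S.card + 1 ≤ n) (b : ℕ → ℤ)
    (hb : ∀ i, b i = ⌊(a i : ℝ) / (ε * (a p : ℝ) / (3 * n))⌋) :
    0 < ∑ i ∈ S, (b i : ℝ) ∧
    (ε * (a p : ℝ) / (3 * n)) * ∑ i ∈ S, (b i : ℝ) ≤ ∑ i ∈ S, (a i : ℝ) ∧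
    ∑ i ∈ S, (a i : ℝ) ≤ (1 + ε / 3) * ((ε * (a p : ℝ) / (3 * n)) * ∑ i ∈ S, (b i : ℝ)) := by
  have hn' : (2 : ℝ) ≤ n := by exact_mod_cast hn
  have hp' : (0 : ℝ) < a p := by exact_mod_cast hp
  have hq' : (a p : ℝ) ≤ a q := by exact_mod_cast hq
  have hc' : (S.card : ℝ) + 1 ≤ n := by exact_mod_cast hc
  obtain ⟨d, hd⟩ : ∃ d, d = ε * (a p : ℝ) / (3 * n) := ⟨_, rfl⟩
  rw [← hd]
  simp only [← hd] at hb
  have hd0 : 0 < d := by rw [hd]; positivity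
  have hb1 : ∀ i, d * (b i : ℝ) ≤ a i := fun i => by
    have := Int.floor_le ((a i : ℝ) / d)
    rw [← hb, le_div_iff₀ hd0] at this
    linarith
  have hb2 : ∀ i, (a i : ℝ) ≤ d * (b i : ℝ) + d := fun i => by
    have := Int.lt_floor_add_one ((a i : ℝ) / d)
    rw [← hb, div_lt_iff₀ hd0] at this
    linarith
  have hb0 : ∀ i, (0 : ℝ) ≤ b i := fun i => by
    have : 0 ≤ b i := by rw [hb]; exact Int.floor_nonneg.2 (by positivity)
    exact_mod_cast this
  have hx : (b q : ℝ) ≤ ∑ i ∈ S, (b i : ℝ) :=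
    Finset.single_le_sum (f := fun i => (b i : ℝ)) (fun i _ => hb0 i) hqS
  have hbq := hb2 q
  have hap : d * (3 * n) = ε * a p := by rw [hd]; field_simp
  have hX : ∑ i ∈ S, (a i : ℝ) ≤ d * ∑ i ∈ S, (b i : ℝ) + S.card * d := by
    calc _ ≤ ∑ i ∈ S, (d * (b i : ℝ) + d) := Finset.sum_le_sum fun i _ => hb2 i
      _ = _ := by rw [Finset.sum_add_distrib, Finset.mul_sum]; simp
  have h1 : d * (3 * n - ε) ≤ ε * (d * ∑ i ∈ S, (b i : ℝ)) := by
    have h2 : (a p : ℝ) - d ≤ d * ∑ i ∈ S, (b i : ℝ) := by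
      have := mul_le_mul_of_nonneg_left hx hd0.le
      linarith
    have := mul_le_mul_of_nonneg_left h2 hε0.le
    linarith
  refine ⟨?_, ?_, ?_⟩
  · have : 0 < d * (3 * n - ε) := mul_pos hd0 (by linarith)
    by_contra hcon
    have : ε * (d * ∑ i ∈ S, (b i : ℝ)) ≤ 0 :=
      mul_nonpos_of_nonneg_of_nonpos hε0.le
        (mul_nonpos_of_nonneg_of_nonpos hd0.le (not_lt.1 hcon))
    linarith
  · rw [Finset.mul_sum]
    exact Finset.sum_le_sum fun i _ => hb1 i
  · have : (S.card : ℝ) * d ≤ (n - 1) * d :=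
      mul_le_mul_of_nonneg_right (by linarith) hd0.le
    have : ε * d ≤ 1 * d := mul_le_mul_of_nonneg_right hε1.le hd0.le
    linarith

lemma ssr_ratio {X Y x y d c : ℝ} (hd : 0 < d) (hy : 0 < y) (hx : 0 < x) (hc : 0 < c)
    (h1 : X ≤ c * (d * x)) (h2 : d * y ≤ Y) : X / Y ≤ c * (x / y) := by
  have hY : 0 < Y := lt_of_lt_of_le (by positivity) h2
  calc X / Y ≤ (c * (d * x)) / (d * y) := by gcongr
    _ = _ := by field_simp

lemma ssr_ratio' {X Y x y d c : ℝ} (hd : 0 < d) (hy : 0 < y) (hY : 0 < Y) (hx : 0 < x)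
    (hc : 0 < c) (h1 : d * x ≤ X) (h2 : Y ≤ c * (d * y)) : x / y ≤ c * (X / Y) := by
  rw [← mul_div_assoc, div_le_div_iff₀ hy hY]
  have a1 : x * Y ≤ x * (c * (d * y)) := by gcongr
  have a2 : c * y * (d * x) ≤ c * y * X := by gcongr
  linarith

lemma ssr_comm (f : ℕ → ℝ) (S T : Finset ℕ) : ssrMR f S T = ssrMR f T S := max_comm _ _

lemma ssr_feas {n p : ℕ} {a : ℕ → ℕ} (hmono : StrictMonoOn a (Finset.Icc 1 n))
    {S T : Finset ℕ} (h : SemiFeasible n p S T) :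
    p ∈ S ∧ (∃ q ∈ T, a p ≤ a q) ∧ S.card + 1 ≤ n ∧ T.card + 1 ≤ n := by
  obtain ⟨hS, hT, hS0, hT0, hd, hm, hlt⟩ := h
  have hp : p ∈ S := Finset.mem_of_max hm
  obtain ⟨q, hq⟩ := Finset.max_of_nonempty hT0
  have hqT : q ∈ T := Finset.mem_of_max hq
  have hpq : p < q := by rw [hq] at hlt; exact WithBot.coe_lt_coe.1 hlt
  have hcard : S.card + T.card ≤ n := by
    rw [← Finset.card_union_of_disjoint hd]
    simpa using Finset.card_le_card (Finset.union_subset hS hT)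
  have := hS0.card_pos
  have := hT0.card_pos
  exact ⟨hp, ⟨q, hqT, (hmono (hS hp) (hT hqT) hpq).le⟩, by omega, by omega⟩

/-- taking, for each `p ∈ {1,…,n−1}`, an optimal feasible pair for the
scaled Semi-Restricted instance `(A'_p, p)`, and then the best of these pairs with
respect to `A`, yields a `(1+ε)`-approximation for Subset-Sums Ratio on `A`. -/
theorem stmt12 (n : ℕ) (hn : 2 ≤ n) (a : ℕ → ℕ)
    (hpos : ∀ i ∈ Finset.Icc 1 n, 0 < a i)
    (hmono : StrictMonoOn a (Finset.Icc 1 n))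
    (ε : ℝ) (hε0 : 0 < ε) (hε1 : ε < 1)
    (a' : ℕ → ℕ → ℤ)
    (ha' : ∀ p i, a' p i = ⌊(a i : ℝ) / (ε * (a p : ℝ) / (3 * n))⌋)
    (S₁ S₂ : ℕ → Finset ℕ)
    (hfeas : ∀ p ∈ Finset.Icc 1 (n - 1), SemiFeasible n p (S₁ p) (S₂ p))
    (hoptp : ∀ p ∈ Finset.Icc 1 (n - 1), ∀ T₁ T₂ : Finset ℕ,
      SemiFeasible n p T₁ T₂ →
      ssrMR (fun i => ((a' p i : ℝ))) (S₁ p) (S₂ p) ≤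
        ssrMR (fun i => ((a' p i : ℝ))) T₁ T₂)
    (phat : ℕ) (hphat : phat ∈ Finset.Icc 1 (n - 1))
    (hbest : ∀ p ∈ Finset.Icc 1 (n - 1),
      ssrMR (fun i => (a i : ℝ)) (S₁ phat) (S₂ phat) ≤
        ssrMR (fun i => (a i : ℝ)) (S₁ p) (S₂ p)) :
    ∀ T₁ T₂ : Finset ℕ, T₁ ⊆ Finset.Icc 1 n → T₂ ⊆ Finset.Icc 1 n →
      T₁.Nonempty → T₂.Nonempty → Disjoint T₁ T₂ →
      ssrMR (fun i => (a i : ℝ)) (S₁ phat) (S₂ phat) ≤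
        (1 + ε) * ssrMR (fun i => (a i : ℝ)) T₁ T₂ := by
  have main : ∀ p, ∀ T₁ T₂ : Finset ℕ, SemiFeasible n p T₁ T₂ →
      ssrMR (fun i => (a i : ℝ)) (S₁ phat) (S₂ phat) ≤
        (1 + ε) * ssrMR (fun i => (a i : ℝ)) T₁ T₂ := by
    intro p T₁ T₂ hT
    obtain ⟨t1, ⟨r, t2, t3⟩, t4, t5⟩ := ssr_feas hmono hT
    have hpn : p ∈ Finset.Icc 1 (n - 1) := by
      obtain ⟨hS, hT, hS0, hT0, hd, hm, hlt⟩ := hT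
      obtain ⟨q, hq⟩ := Finset.max_of_nonempty hT0
      have hpq : p < q := by rw [hq] at hlt; exact WithBot.coe_lt_coe.1 hlt
      have h1 := Finset.mem_Icc.1 (hS t1)
      have h2 := Finset.mem_Icc.1 (hT (Finset.mem_of_max hq))
      exact Finset.mem_Icc.2 ⟨h1.1, by omega⟩
    have hap : 0 < a p := hpos p (hT.1 t1)
    obtain ⟨s1, ⟨q, s2, s3⟩, s4, s5⟩ := ssr_feas hmono (hfeas p hpn)
    obtain ⟨x0, x1, x2⟩ := ssr_key n p p a ε hε0 hε1 hn hap le_rfl _ s1 s4 (a' p) (ha' p)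
    obtain ⟨y0, y1, y2⟩ := ssr_key n p q a ε hε0 hε1 hn hap s3 _ s2 s5 (a' p) (ha' p)
    obtain ⟨u0, u1, u2⟩ := ssr_key n p p a ε hε0 hε1 hn hap le_rfl _ t1 t4 (a' p) (ha' p)
    obtain ⟨v0, v1, v2⟩ := ssr_key n p r a ε hε0 hε1 hn hap t3 _ t2 t5 (a' p) (ha' p)
    have hd : 0 < ε * (a p : ℝ) / (3 * n) := by
      have : (0 : ℝ) < a p := by exact_mod_cast hap
      have : (0 : ℝ) < n := by exact_mod_cast (by omega : 0 < n)
      positivity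
    have hc : 0 < 1 + ε / 3 := by linarith
    have hU := lt_of_lt_of_le (mul_pos hd u0) u1
    have hV := lt_of_lt_of_le (mul_pos hd v0) v1
    have e1 : ssrMR (fun i => (a i : ℝ)) (S₁ p) (S₂ p) ≤
        (1 + ε / 3) * ssrMR (fun i => ((a' p i : ℝ))) (S₁ p) (S₂ p) :=
      max_le ((ssr_ratio hd y0 x0 hc x2 y1).trans
          (mul_le_mul_of_nonneg_left (le_max_left _ _) hc.le))
        ((ssr_ratio hd x0 y0 hc y2 x1).trans
          (mul_le_mul_of_nonneg_left (le_max_right _ _) hc.le))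
    have e2 : ssrMR (fun i => ((a' p i : ℝ))) T₁ T₂ ≤
        (1 + ε / 3) * ssrMR (fun i => (a i : ℝ)) T₁ T₂ :=
      max_le ((ssr_ratio' hd v0 hV u0 hc u1 v2).trans
          (mul_le_mul_of_nonneg_left (le_max_left _ _) hc.le))
        ((ssr_ratio' hd u0 hU v0 hc v1 u2).trans
          (mul_le_mul_of_nonneg_left (le_max_right _ _) hc.le))
    have e3 : 0 ≤ ssrMR (fun i => (a i : ℝ)) T₁ T₂ :=
      le_trans (div_nonneg hU.le hV.le) (le_max_left _ _)
    calc _ ≤ _ := hbest p hpn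
      _ ≤ _ := e1
      _ ≤ (1 + ε / 3) * ((1 + ε / 3) * ssrMR (fun i => (a i : ℝ)) T₁ T₂) :=
        mul_le_mul_of_nonneg_left ((hoptp p hpn T₁ T₂ hT).trans e2) hc.le
      _ = ((1 + ε / 3) * (1 + ε / 3)) * ssrMR (fun i => (a i : ℝ)) T₁ T₂ := by ring
      _ ≤ _ := mul_le_mul_of_nonneg_right (by nlinarith) e3
  intro T₁ T₂ h1 h2 n1 n2 hd
  obtain ⟨p, hp⟩ := Finset.max_of_nonempty n1
  obtain ⟨q, hq⟩ := Finset.max_of_nonempty n2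
  rcases lt_trichotomy p q with h | h | h
  · exact main p T₁ T₂ ⟨h1, h2, n1, n2, hd, hp, by rw [hq]; exact WithBot.coe_lt_coe.2 h⟩
  · subst h
    exact absurd (Finset.mem_of_max hq) (Finset.disjoint_left.1 hd (Finset.mem_of_max hp))
  · rw [ssr_comm _ T₁ T₂]
    exact main q T₂ T₁ ⟨h2, h1, n2, n1, hd.symm, hq, by rw [hp]; exact WithBot.coe_lt_coe.2 h⟩
end
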